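/- If R = S ⊕ T is a ring direct sum where S is semisimple, then R has no middle class if and only if T has no middle class. (Sufficiency direction: if every right T-module is either T-injective or poor over T, then every right R-module is either injective or poor over R.) -/

import Mathlib

universe u v

/-- `M` is `N`-injective. -/
def RelInjective (R : Type u) [Ring R] (M N : Type v) [AddCommGroup M] [Module R M]
    [AddCommGroup N] [Module R N] : Prop :=
  ∀ (K : Submodule R N) (f : K →ₗ[R] M), ∃ g : N →ₗ[R] M, ∀ x : K, g x = f x

/-- `M` is poor: its injectivity domain consists exactly of the semisimple modules. -/
def Poor (R : Type u) [Ring R] (M : Type v) [AddCommGroup M] [Module R M] : Prop :=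
  ∀ (N : Type v) [AddCommGroup N] [Module R N], RelInjective R M N → IsSemisimpleModule R N

/-- `R` has no (right) middle class: every module is injective or poor. -/
def NoMiddleClass (R : Type u) [Ring R] : Prop :=
  ∀ (M : Type v) [AddCommGroup M] [Module R M], Module.Injective R M ∨ Poor R M

theorem inj_iff_rel (R : Type u) [Ring R] (M : Type v) [AddCommGroup M] [Module R M] :
    Module.Injective R M ↔
      ∀ (N : Type v) [AddCommGroup N] [Module R N], RelInjective R M N := by
  constructor
  · intro h N _ _ K f
    exact h.out K.subtype K.injective_subtype f
  · intro h
    refine ⟨fun X Y _ _ _ _ f hf g => ?_⟩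
    obtain ⟨k, hk⟩ := h Y (LinearMap.range f)
      (g ∘ₗ (LinearEquiv.ofInjective f hf).symm.toLinearMap)
    refine ⟨k, fun x => ?_⟩
    have := hk (LinearEquiv.ofInjective f hf x)
    simpa using this

section transfer
variable {R T : Type u} [Ring R] [Ring T] 

theorem semi_transfer (φ : R →+* T) (hφ : Function.Surjective φ) (N : Type v) [AddCommGroup N] [Module R N] [Module T N]
    (hN : ∀ (r : R) (n : N), r • n = φ r • n) :
    IsSemisimpleModule R N ↔ IsSemisimpleModule T N := by
  have : RingHomSurjective φ := ⟨hφ⟩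
  let l : N →ₛₗ[φ] N := { toFun := id, map_add' := fun _ _ => rfl, map_smul' := hN }
  exact l.isSemisimpleModule_iff_of_bijective Function.bijective_id

theorem rel_transfer (φ : R →+* T) (hφ : Function.Surjective φ)
    (M N : Type v) [AddCommGroup N] [Module R N] [Module T N]
    [AddCommGroup M] [Module R M] [Module T M]
    (hM : ∀ (r : R) (n : M), r • n = φ r • n)
    (hN : ∀ (r : R) (n : N), r • n = φ r • n) :
    RelInjective R M N ↔ RelInjective T M N := by
  constructor
  · intro h K f
    let K' : Submodule R N :=
      { K.toAddSubmonoid with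
        smul_mem' := fun r x hx => by
          rw [hN]; exact K.smul_mem _ hx }
    let f' : K' →ₗ[R] M :=
      { toFun := fun x => f ⟨x.1, x.2⟩
        map_add' := fun x y => f.map_add ⟨x.1, x.2⟩ ⟨y.1, y.2⟩
        map_smul' := fun r x => by
          rw [RingHom.id_apply, hM, ← f.map_smul]
          congr 1
          exact Subtype.ext (hN r x.1) }
    obtain ⟨g, hg⟩ := h K' f'
    refine ⟨{ toFun := g, map_add' := g.map_add, map_smul' := fun t x => ?_ },
      fun x => hg ⟨x.1, x.2⟩⟩
    obtain ⟨r, rfl⟩ := hφ t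
    rw [RingHom.id_apply, ← hN, ← hM, g.map_smul]
  · intro h K f
    let K' : Submodule T N :=
      { K.toAddSubmonoid with
        smul_mem' := fun t x hx => by
          obtain ⟨r, rfl⟩ := hφ t
          rw [← hN]; exact K.smul_mem _ hx }
    let f' : K' →ₗ[T] M :=
      { toFun := fun x => f ⟨x.1, x.2⟩
        map_add' := fun x y => f.map_add ⟨x.1, x.2⟩ ⟨y.1, y.2⟩
        map_smul' := fun t x => by
          obtain ⟨r, rfl⟩ := hφ t
          rw [RingHom.id_apply, ← hM, ← f.map_smul]
          congr 1
          exact Subtype.ext (hN r x.1).symm }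
    obtain ⟨g, hg⟩ := h K' f'
    refine ⟨{ toFun := g, map_add' := g.map_add, map_smul' := fun r x => ?_ },
      fun x => hg ⟨x.1, x.2⟩⟩
    rw [RingHom.id_apply, hN, hM, g.map_smul]

end transfer

section parts
variable (S T : Type u) [Ring S] [Ring T]

/-- Multiplication by `(0,1)`. -/
def prT (M : Type v) [AddCommGroup M] [Module (S × T) M] : M →ₗ[S × T] M where
  toFun m := ((0, 1) : S × T) • m
  map_add' := smul_add _
  map_smul' r m := by simp [smul_smul, Prod.mul_def]

/-- Multiplication by `(1,0)`. -/
def prS (M : Type v) [AddCommGroup M] [Module (S × T) M] : M →ₗ[S × T] M where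
  toFun m := ((1, 0) : S × T) • m
  map_add' := smul_add _
  map_smul' r m := by simp [smul_smul, Prod.mul_def]

variable (M : Type v) [AddCommGroup M] [Module (S × T) M]

theorem pr_add (m : M) : prS S T M m + prT S T M m = m := by
  change ((1, 0) : S × T) • m + ((0, 1) : S × T) • m = m
  rw [← add_smul]
  have h : ((1, 0) : S × T) + (0, 1) = 1 := by ext <;> simp
  rw [h, one_smul]

/-- The `T`-part. -/
def partT : Submodule (S × T) M := LinearMap.range (prT S T M)

/-- The `S`-part. -/
def partS : Submodule (S × T) M := LinearMap.range (prS S T M)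

theorem prT_of_mem {m : M} (h : m ∈ partT S T M) : ((0, 1) : S × T) • m = m := by
  obtain ⟨x, rfl⟩ := h
  change ((0, 1) : S × T) • ((0, 1) : S × T) • x = ((0, 1) : S × T) • x
  simp [smul_smul]

theorem prS_of_mem {m : M} (h : m ∈ partS S T M) : ((1, 0) : S × T) • m = m := by
  obtain ⟨x, rfl⟩ := h
  change ((1, 0) : S × T) • ((1, 0) : S × T) • x = ((1, 0) : S × T) • x
  simp [smul_smul]

/-- `T`-module structure. -/
@[reducible] def modT : Module T (partT S T M) where
  smul t m := ((0, t) : S × T) • m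
  one_smul m := Subtype.ext (prT_of_mem S T M m.2)
  mul_smul a b m := by
    change ((0, a * b) : S × T) • m = ((0, a) : S × T) • ((0, b) : S × T) • m
    simp [smul_smul]
  smul_zero a := smul_zero (((0, a) : S × T))
  smul_add a := smul_add (((0, a) : S × T))
  zero_smul m := zero_smul (S × T) m
  add_smul a b m := by
    change ((0, a + b) : S × T) • m = ((0, a) : S × T) • m + ((0, b) : S × T) • m
    simp [← add_smul]

/-- `S`-module structure. -/
@[reducible] def modS : Module S (partS S T M) where
  smul t m := ((t, 0) : S × T) • m
  one_smul m := Subtype.ext (prS_of_mem S T M m.2)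
  mul_smul a b m := by
    change ((a * b, 0) : S × T) • m = ((a, 0) : S × T) • ((b, 0) : S × T) • m
    simp [smul_smul]
  smul_zero a := smul_zero (((a, 0) : S × T))
  smul_add a := smul_add (((a, 0) : S × T))
  zero_smul m := zero_smul (S × T) m
  add_smul a b m := by
    change ((a + b, 0) : S × T) • m = ((a, 0) : S × T) • m + ((b, 0) : S × T) • m
    simp [← add_smul]

theorem modT_compat (r : S × T) (m : partT S T M) :
    let := modT S T M
    r • m = RingHom.snd S T r • m := by
  change r • m = ((0, r.2) : S × T) • m
  have h : ((0, 1) : S × T) • m = m := Subtype.ext (prT_of_mem S T M m.2)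
  conv_lhs => rw [← h]
  simp [smul_smul, Prod.mul_def]

theorem modS_compat (r : S × T) (m : partS S T M) :
    let := modS S T M
    r • m = RingHom.fst S T r • m := by
  change r • m = ((r.1, 0) : S × T) • m
  have h : ((1, 0) : S × T) • m = m := Subtype.ext (prS_of_mem S T M m.2)
  conv_lhs => rw [← h]
  simp [smul_smul, Prod.mul_def]

theorem partS_semisimple (hS : IsSemisimpleRing S) :
    IsSemisimpleModule (S × T) (partS S T M) := by
  let := modS S T M
  exact (semi_transfer (RingHom.fst S T) Prod.fst_surjective _ (modS_compat S T M)).2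
    inferInstance

theorem part_sup : partS S T M ⊔ partT S T M = ⊤ := by
  rw [eq_top_iff]
  intro m _
  rw [← pr_add S T M m]
  exact Submodule.add_mem_sup ⟨m, rfl⟩ ⟨m, rfl⟩

theorem semi_of_partT (hS : IsSemisimpleRing S)
    (h : IsSemisimpleModule (S × T) (partT S T M)) : IsSemisimpleModule (S × T) M := by
  have := partS_semisimple S T M hS
  have h2 : IsSemisimpleModule (S × T) ↥(partS S T M ⊔ partT S T M) :=
    .sup inferInstance h
  rw [part_sup] at h2
  exact (LinearEquiv.isSemisimpleModule_iff (Submodule.topEquiv)).1 h2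

variable (N : Type v) [AddCommGroup N] [Module (S × T) N]

theorem rel_part (h : RelInjective (S × T) M N) :
    RelInjective (S × T) (partT S T M) (partT S T N) := by
  intro K f
  let e := Submodule.equivSubtypeMap (partT S T N) K
  obtain ⟨g, hg⟩ := h (K.map (partT S T N).subtype)
    ((partT S T M).subtype ∘ₗ f ∘ₗ e.symm.toLinearMap)
  refine ⟨(prT S T M).rangeRestrict ∘ₗ g ∘ₗ (partT S T N).subtype, fun x => Subtype.ext ?_⟩
  have h1 := hg (e x)
  have h2 : g (x : partT S T N) = f x := by simpa [e] using h1
  change prT S T M (g (x : partT S T N)) = f x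
  rw [h2]
  exact prT_of_mem S T M (f x).2

theorem part_rel (hS : IsSemisimpleRing S)
    (h : RelInjective (S × T) (partT S T M) (partT S T N)) :
    RelInjective (S × T) M N := by
  intro K f
  have := partS_semisimple S T N hS
  -- T side
  let KT := K.comap (partT S T N).subtype
  let fT : KT →ₗ[S × T] partT S T M :=
    (prT S T M).rangeRestrict ∘ₗ f ∘ₗ
      LinearMap.restrict (partT S T N).subtype (p := KT) (q := K) (fun x hx => hx)
  obtain ⟨g, hg⟩ := h KT fT
  -- S side
  let KS := K.comap (partS S T N).subtype
  obtain ⟨p, hp⟩ : ∃ p : partS S T N →ₗ[S × T] KS, p ∘ₗ KS.subtype = LinearMap.id :=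
    IsSemisimpleModule.extension_property (R := S × T) (M := partS S T N) (N := KS)
      KS.subtype KS.injective_subtype LinearMap.id
  let fS : KS →ₗ[S × T] M :=
    f ∘ₗ LinearMap.restrict (partS S T N).subtype (p := KS) (q := K) (fun x hx => hx)
  refine ⟨fS ∘ₗ p ∘ₗ (prS S T N).rangeRestrict +
    (partT S T M).subtype ∘ₗ g ∘ₗ (prT S T N).rangeRestrict, fun x => ?_⟩
  have hxS : (prS S T N).rangeRestrict x.1 ∈ KS := K.smul_mem ((1, 0) : S × T) x.2
  have hxT : (prT S T N).rangeRestrict x.1 ∈ KT := K.smul_mem ((0, 1) : S × T) x.2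
  have e1 : p ((prS S T N).rangeRestrict x.1) = ⟨_, hxS⟩ :=
    LinearMap.congr_fun hp ⟨_, hxS⟩
  have e2 := hg ⟨_, hxT⟩
  change fS (p ((prS S T N).rangeRestrict x.1)) +
    (g ((prT S T N).rangeRestrict x.1) : M) = f x
  rw [e1]
  erw [e2]
  change f (((1, 0) : S × T) • x) +
    ((0, 1) : S × T) • f (((0, 1) : S × T) • x) = f x
  rw [f.map_smul, f.map_smul, smul_smul]
  have := pr_add S T M (f x)
  simpa [prS, prT] using this

end parts

/-- If `R = S ⊕ T` is a ring direct sum with `S` semisimple, then `R` has no middle class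
iff `T` has no middle class. -/
theorem stmt_1 (S T : Type u) [Ring S] [Ring T] (hS : IsSemisimpleRing S) :
    NoMiddleClass.{u, v} (S × T) ↔ NoMiddleClass.{u, v} T := by
  have hφ : Function.Surjective (RingHom.snd S T) := Prod.snd_surjective
  constructor
  · intro h M _ _
    let : Module (S × T) M := Module.compHom M (RingHom.snd S T)
    rcases h M with h | h
    · left
      rw [inj_iff_rel] at h ⊢
      intro N _ _
      let : Module (S × T) N := Module.compHom N (RingHom.snd S T)
      exact (rel_transfer (RingHom.snd S T) hφ M N (fun _ _ => rfl) (fun _ _ => rfl)).1 (h N)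
    · right
      intro N _ _ hN
      let : Module (S × T) N := Module.compHom N (RingHom.snd S T)
      exact (semi_transfer (RingHom.snd S T) hφ N (fun _ _ => rfl)).1
        (h N ((rel_transfer (RingHom.snd S T) hφ M N (fun _ _ => rfl) (fun _ _ => rfl)).2 hN))
  · intro h M _ _
    let := modT S T M
    rcases h (partT S T M) with h | h
    · left
      rw [inj_iff_rel] at h ⊢
      intro N _ _
      let := modT S T N
      exact part_rel S T M N hS ((rel_transfer (RingHom.snd S T) hφ _ _
        (modT_compat S T M) (modT_compat S T N)).2 (h _))
    · right
      intro N _ _ hN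
      let := modT S T N
      exact semi_of_partT S T N hS ((semi_transfer (RingHom.snd S T) hφ _
        (modT_compat S T N)).2 (h _ ((rel_transfer (RingHom.snd S T) hφ _ _
        (modT_compat S T M) (modT_compat S T N)).1 (rel_part S T M N hN))))
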